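/- arXiv:1410.4315 — 3 statements merged into one kernel-verified Lean document; each statement's English description precedes it below -/
import Mathlib

section
/- Let n ∈ ℕ, σ ∈ {0,1}^n, and let μ_{j,m} be the Haar coefficients of the local discrepancy of the digit shifted Hammersley point set R_{n,σ} with N = 2^n points. If j = (j_1,j_2) with 0 ≤ j_1,j_2 ≤ n and j_1 + j_2 ≥ n − 1, and m ∈ D_j is such that the open interior of the dyadic box I_{j,m} contains no point of R_{n,σ}, then |μ_{j,m}| = 2^{−2(j_1+j_2+2)}. -/
open MeasureTheory

/-- The real value of a binary digit. -/
noncomputable def bval (b : Bool) : ℝ := if b then 1 else 0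

/-- The two-dimensional digit shifted Hammersley point set with `2^n` points,
indexed by the digit vectors `t : Fin n → Bool`.  The index `i : Fin n`
corresponds to the digit `t_{i+1}` of the paper. -/
noncomputable def hammersleyShifted (n : ℕ) (σ : Fin n → Bool) (t : Fin n → Bool) : ℝ × ℝ :=
  (∑ i : Fin n, bval (t i) / 2 ^ (n - i.val),
   ∑ i : Fin n, bval (t i != σ i) / 2 ^ (i.val + 1))

/-- Number of points of the (indexed) point set `P` lying in `[0,t₁) × [0,t₂)`. -/
noncomputable def countIn {ι : Type*} [Fintype ι] (P : ι → ℝ × ℝ) (t : ℝ × ℝ) : ℕ :=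
  (Finset.univ.filter
    (fun k => 0 ≤ (P k).1 ∧ (P k).1 < t.1 ∧ 0 ≤ (P k).2 ∧ (P k).2 < t.2)).card

/-- The local discrepancy `D_N(P,t) = A_N([0,t),P)/N - t₁t₂` of an indexed point set. -/
noncomputable def localDisc {ι : Type*} [Fintype ι] (P : ι → ℝ × ℝ) (t : ℝ × ℝ) : ℝ :=
  (countIn P t : ℝ) / (Fintype.card ι) - t.1 * t.2

/-- The `L_p`-discrepancy of an indexed point set. -/
noncomputable def LpDisc (p : ℝ) {ι : Type*} [Fintype ι] (P : ι → ℝ × ℝ) : ℝ :=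
  (∫ t in Set.Icc (0 : ℝ × ℝ) 1, |localDisc P t| ^ p) ^ (1 / p)

/-- One-dimensional `L∞`-normalized Haar function `h_{j,m}`, with `j ∈ ℤ`, `j = -1`
giving the indicator of `[0,1)` and `j ≥ 0` the usual Haar function on `I_{j,m}`. -/
noncomputable def haar1 (j : ℤ) (m : ℕ) (x : ℝ) : ℝ :=
  if j = -1 then (if 0 ≤ x ∧ x < 1 then 1 else 0)
  else if (2 * m : ℝ) / 2 ^ (j.toNat + 1) ≤ x ∧ x < (2 * m + 1 : ℝ) / 2 ^ (j.toNat + 1) then 1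
  else if (2 * m + 1 : ℝ) / 2 ^ (j.toNat + 1) ≤ x ∧ x < (2 * m + 2 : ℝ) / 2 ^ (j.toNat + 1) then -1
  else 0

/-- Two-dimensional (tensor product) Haar function. -/
noncomputable def haar2 (j : ℤ × ℤ) (m : ℕ × ℕ) (x : ℝ × ℝ) : ℝ :=
  haar1 j.1 m.1 x.1 * haar1 j.2 m.2 x.2

/-- One-dimensional dyadic interval `I_{j,m}` (with `I_{-1,0} = [0,1)`). -/
noncomputable def dyadicI (j : ℤ) (m : ℕ) : Set ℝ :=
  if j = -1 then Set.Ico (0 : ℝ) 1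
  else Set.Ico ((m : ℝ) / 2 ^ j.toNat) ((m + 1 : ℝ) / 2 ^ j.toNat)

/-- Haar coefficient `μ_{j,m} = ∫_{[0,1]²} D_N(P,t) h_{j,m}(t) dt` of the local
discrepancy of an indexed point set. -/
noncomputable def haarCoeff {ι : Type*} [Fintype ι] (P : ι → ℝ × ℝ) (j : ℤ × ℤ) (m : ℕ × ℕ) : ℝ :=
  ∫ t in Set.Icc (0 : ℝ × ℝ) 1, localDisc P t * haar2 j m t

/-- Number of zero components of the shift `σ`. -/
noncomputable def zeroCount {n : ℕ} (σ : Fin n → Bool) : ℕ :=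
  (Finset.univ.filter (fun j => σ j = false)).card

/-- The symmetrized digit shifted Hammersley point set `R_{n,σ} ∪ R_{n,σ⊕1}`
with `2^(n+1)` points, indexed by `Bool × (Fin n → Bool)`. -/
noncomputable def hammersleySym (n : ℕ) (σ : Fin n → Bool) :
    Bool × (Fin n → Bool) → ℝ × ℝ :=
  fun bt => if bt.1 then hammersleyShifted n (fun i => !(σ i)) bt.2
            else hammersleyShifted n σ bt.2

/-- The multiset `R_{n,σ} ∪ {(x, 1-y) : (x,y) ∈ R_{n,σ}}` with `2^(n+1)` points
(counted with multiplicity), indexed by `Bool × (Fin n → Bool)`. -/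
noncomputable def hammersleySymTilde (n : ℕ) (σ : Fin n → Bool) :
    Bool × (Fin n → Bool) → ℝ × ℝ :=
  fun bt => if bt.1 then ((hammersleyShifted n σ bt.2).1, 1 - (hammersleyShifted n σ bt.2).2)
            else hammersleyShifted n σ bt.2

/-! The counting part of the local discrepancy is a finite sum of indicators of quadrants with
apexes at the points, and such an indicator is a product of two one-dimensional step functions.
A step function without a jump inside `I_{j,m}` is constant there, hence orthogonal to `h_{j,m}`, so
a point outside the open box contributes nothing. What remains is the coefficient of `-t₁t₂`, minus
the product of the two moments `∫ x h_{j,m}(x) dx = -2^{-2(j+1)}`. -/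

lemma dyadicI_natCast (j m : ℕ) :
    dyadicI j m = Set.Ico ((m : ℝ) / 2 ^ j) ((m + 1 : ℝ) / 2 ^ j) := by
  simp [dyadicI, show (j : ℤ) ≠ -1 by lia]

lemma measurableSet_dyadicI (j : ℤ) (m : ℕ) : MeasurableSet (dyadicI j m) := by
  unfold dyadicI
  split_ifs <;> exact measurableSet_Ico

lemma dyadicI_subset_Icc {j m : ℕ} (hm : m < 2 ^ j) : dyadicI j m ⊆ Set.Icc 0 1 := by
  have hm' : (m : ℝ) + 1 ≤ 2 ^ j := mod_cast hm
  rw [dyadicI_natCast]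
  refine Set.Ico_subset_Icc_self.trans (Set.Icc_subset_Icc (by positivity) ?_)
  exact div_le_one_of_le₀ hm' (by positivity)

lemma dyadicI_succ_two_mul (j m : ℕ) :
    dyadicI (j + 1 : ℕ) (2 * m) =
      Set.Ico (2 * m / 2 ^ (j + 1) : ℝ) ((2 * m + 1) / 2 ^ (j + 1)) := by
  rw [dyadicI_natCast, Nat.cast_mul, Nat.cast_ofNat]

lemma dyadicI_succ_two_mul_add_one (j m : ℕ) :
    dyadicI (j + 1 : ℕ) (2 * m + 1) =
      Set.Ico ((2 * m + 1) / 2 ^ (j + 1) : ℝ) ((2 * m + 2) / 2 ^ (j + 1)) := by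
  rw [dyadicI_natCast, Nat.cast_add_one, add_assoc, one_add_one_eq_two, Nat.cast_mul,
    Nat.cast_ofNat]

lemma dyadicI_eq_union_halves (j m : ℕ) :
    dyadicI j m = dyadicI (j + 1 : ℕ) (2 * m) ∪ dyadicI (j + 1 : ℕ) (2 * m + 1) := by
  have hleft : (m : ℝ) / 2 ^ j = 2 * m / 2 ^ (j + 1) := by field_simp; ring
  have hright : (m + 1 : ℝ) / 2 ^ j = (2 * m + 2) / 2 ^ (j + 1) := by field_simp; ring
  rw [dyadicI_natCast, dyadicI_succ_two_mul, dyadicI_succ_two_mul_add_one, hleft, hright,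
    Set.Ico_union_Ico_eq_Ico] <;> gcongr <;> linarith

lemma volume_real_dyadicI (j m : ℕ) : volume.real (dyadicI j m) = 1 / 2 ^ j := by
  rw [dyadicI_natCast, Real.volume_real_Ico_of_le (by gcongr; linarith)]
  ring

lemma setIntegral_id_dyadicI (j m : ℕ) :
    ∫ x in dyadicI j m, x = (2 * m + 1) / 2 ^ (2 * j + 1) := by
  rw [dyadicI_natCast, integral_Ico_eq_integral_Ioc,
    ← intervalIntegral.integral_of_le (by gcongr; linarith), integral_id]
  field_simp
  ring

lemma haar1_natCast (j m : ℕ) :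
    haar1 j m = (dyadicI (j + 1 : ℕ) (2 * m)).indicator 1 -
      (dyadicI (j + 1 : ℕ) (2 * m + 1)).indicator 1 := by
  ext x
  simp only [haar1, show (j : ℤ) ≠ -1 by lia, if_false, Int.toNat_natCast, dyadicI_succ_two_mul,
    dyadicI_succ_two_mul_add_one, Pi.sub_apply, Set.indicator_apply, Set.mem_Ico, Pi.one_apply]
  split_ifs with hleft hright hright
  · exact absurd hleft.2 hright.1.not_gt
  all_goals norm_num

lemma haar1_eq_zero_of_notMem {j m : ℕ} {x : ℝ} (hx : x ∉ dyadicI j m) : haar1 j m x = 0 := by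
  rw [dyadicI_eq_union_halves, Set.mem_union, not_or] at hx
  rw [haar1_natCast, Pi.sub_apply, Set.indicator_of_notMem hx.1, Set.indicator_of_notMem hx.2,
    sub_zero]

lemma measurable_haar1 (j : ℤ) (m : ℕ) : Measurable (haar1 j m) := by
  unfold haar1
  split_ifs
  · exact .ite measurableSet_Ico measurable_const measurable_const
  · exact .ite measurableSet_Ico measurable_const
      (.ite measurableSet_Ico measurable_const measurable_const)

lemma abs_haar1_le_one (j : ℤ) (m : ℕ) (x : ℝ) : |haar1 j m x| ≤ 1 := by
  unfold haar1
  split_ifs <;> norm_num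

lemma measurable_haar2 (j : ℤ × ℤ) (m : ℕ × ℕ) : Measurable (haar2 j m) :=
  ((measurable_haar1 _ _).comp measurable_fst).mul ((measurable_haar1 _ _).comp measurable_snd)

lemma abs_haar2_le_one (j : ℤ × ℤ) (m : ℕ × ℕ) (t : ℝ × ℝ) : |haar2 j m t| ≤ 1 := by
  rw [haar2, abs_mul]
  exact mul_le_one₀ (abs_haar1_le_one _ _ _) (abs_nonneg _) (abs_haar1_le_one _ _ _)

lemma integrableOn_mul_haar2 {f : ℝ × ℝ → ℝ} {s : Set (ℝ × ℝ)} (hf : IntegrableOn f s)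
    (j : ℤ × ℤ) (m : ℕ × ℕ) : IntegrableOn (fun t ↦ f t * haar2 j m t) s :=
  Integrable.mul_bdd (c := 1) hf (measurable_haar2 j m).aestronglyMeasurable
    (.of_forall (abs_haar2_le_one j m))

lemma setIntegral_mul_haar1 {j m : ℕ} (hm : m < 2 ^ j) {f : ℝ → ℝ}
    (hf : IntegrableOn f (Set.Icc 0 1)) :
    ∫ x in Set.Icc 0 1, f x * haar1 j m x =
      (∫ x in dyadicI (j + 1 : ℕ) (2 * m), f x) -
        ∫ x in dyadicI (j + 1 : ℕ) (2 * m + 1), f x := by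
  have hleft : dyadicI (j + 1 : ℕ) (2 * m) ⊆ Set.Icc 0 1 := dyadicI_subset_Icc (by lia)
  have hright : dyadicI (j + 1 : ℕ) (2 * m + 1) ⊆ Set.Icc 0 1 := dyadicI_subset_Icc (by lia)
  have hmeas := measurableSet_dyadicI (j + 1 : ℕ)
  simp only [haar1_natCast, Pi.sub_apply, mul_sub, ← Set.indicator_mul_right, Pi.one_apply, mul_one]
  rw [integral_sub (hf.indicator (hmeas _)) (hf.indicator (hmeas _)),
    setIntegral_indicator (hmeas _), setIntegral_indicator (hmeas _),
    Set.inter_eq_self_of_subset_right hleft, Set.inter_eq_self_of_subset_right hright]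

lemma setIntegral_haar1 {j m : ℕ} (hm : m < 2 ^ j) :
    ∫ x in Set.Icc 0 1, haar1 j m x = 0 := by
  have h := setIntegral_mul_haar1 hm (continuous_const (y := (1 : ℝ))).integrableOn_Icc
  simpa only [one_mul, setIntegral_const, volume_real_dyadicI, sub_self] using h

lemma setIntegral_id_mul_haar1 {j m : ℕ} (hm : m < 2 ^ j) :
    ∫ x in Set.Icc 0 1, x * haar1 j m x = -(1 / 2 ^ (2 * (j + 1))) := by
  rw [setIntegral_mul_haar1 (f := fun x ↦ x) hm continuous_id.integrableOn_Icc,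
    setIntegral_id_dyadicI, setIntegral_id_dyadicI]
  push_cast
  field_simp
  ring

lemma setIntegral_mul_haar1_eq_zero_of_eqOn_const {j m : ℕ} (hm : m < 2 ^ j) {f : ℝ → ℝ} {c : ℝ}
    (hf : Set.EqOn f (fun _ ↦ c) (interior (dyadicI j m))) :
    ∫ x in Set.Icc 0 1, f x * haar1 j m x = 0 := by
  rw [dyadicI_natCast, interior_Ico] at hf
  have hae : ∀ᵐ x : ℝ, f x * haar1 j m x = c * haar1 j m x := by
    filter_upwards [Measure.ae_ne volume ((m : ℝ) / 2 ^ j)] with x hne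
    by_cases hx : x ∈ dyadicI j m
    · rw [dyadicI_natCast] at hx
      rw [hf ⟨hx.1.lt_of_ne' hne, hx.2⟩]
    · simp only [haar1_eq_zero_of_notMem hx, mul_zero]
  rw [integral_congr_ae (ae_restrict_of_ae hae), integral_const_mul, setIntegral_haar1 hm, mul_zero]

lemma setIntegral_indicator_Ioi_mul_haar1_eq_zero {j m : ℕ} (hm : m < 2 ^ j) {z : ℝ}
    (hz : z ∉ interior (dyadicI j m)) :
    ∫ x in Set.Icc 0 1, (Set.Ioi z).indicator 1 x * haar1 j m x = 0 := by
  obtain ⟨c, hc⟩ : ∃ c : ℝ, Set.EqOn ((Set.Ioi z).indicator 1) (fun _ ↦ c)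
      (interior (dyadicI j m)) := by
    rw [dyadicI_natCast, interior_Ico] at hz ⊢
    rcases le_or_gt z (m / 2 ^ j) with hle | hgt
    · exact ⟨1, fun x hx ↦ Set.indicator_of_mem (hle.trans_lt hx.1) _⟩
    · have hge : (m + 1 : ℝ) / 2 ^ j ≤ z := not_lt.mp fun hlt ↦ hz ⟨hgt, hlt⟩
      exact ⟨0, fun x hx ↦ Set.indicator_of_notMem (hx.2.trans_le hge).not_gt _⟩
  exact setIntegral_mul_haar1_eq_zero_of_eqOn_const hm hc

lemma setIntegral_mul_mul_haar2 (f g : ℝ → ℝ) (j : ℤ × ℤ) (m : ℕ × ℕ) :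
    ∫ t in Set.Icc (0 : ℝ × ℝ) 1, f t.1 * g t.2 * haar2 j m t =
      (∫ x in Set.Icc 0 1, f x * haar1 j.1 m.1 x) *
        ∫ y in Set.Icc 0 1, g y * haar1 j.2 m.2 y := by
  rw [Set.Icc_prod_eq, Measure.volume_eq_prod]
  calc
    _ = ∫ t in Set.Icc (0 : ℝ) 1 ×ˢ Set.Icc (0 : ℝ) 1,
          f t.1 * haar1 j.1 m.1 t.1 * (g t.2 * haar1 j.2 m.2 t.2) ∂volume.prod volume := by
      congr with t
      exact mul_mul_mul_comm ..
    _ = _ := setIntegral_prod_mul (fun x ↦ f x * haar1 j.1 m.1 x)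
      (fun y ↦ g y * haar1 j.2 m.2 y) ..

lemma setIntegral_fst_mul_snd_mul_haar2 {j1 j2 m1 m2 : ℕ} (hm1 : m1 < 2 ^ j1)
    (hm2 : m2 < 2 ^ j2) :
    ∫ t in Set.Icc (0 : ℝ × ℝ) 1, t.1 * t.2 * haar2 (j1, j2) (m1, m2) t =
      1 / 2 ^ (2 * (j1 + j2 + 2)) := by
  rw [setIntegral_mul_mul_haar2 (fun x ↦ x) (fun y ↦ y), setIntegral_id_mul_haar1 hm1,
    setIntegral_id_mul_haar1 hm2, neg_mul_neg, one_div_mul_one_div, ← pow_add]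
  congr 2
  ring

lemma setIntegral_indicator_quadrant_mul_haar2_eq_zero {j1 j2 m1 m2 : ℕ} (hm1 : m1 < 2 ^ j1)
    (hm2 : m2 < 2 ^ j2) {z : ℝ × ℝ}
    (hz : z ∉ interior (dyadicI j1 m1) ×ˢ interior (dyadicI j2 m2)) :
    ∫ t in Set.Icc (0 : ℝ × ℝ) 1,
      (Set.Ioi z.1 ×ˢ Set.Ioi z.2).indicator 1 t * haar2 (j1, j2) (m1, m2) t = 0 := by
  have hsep (t : ℝ × ℝ) : (Set.Ioi z.1 ×ˢ Set.Ioi z.2).indicator (1 : ℝ × ℝ → ℝ) t =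
      (Set.Ioi z.1).indicator 1 t.1 * (Set.Ioi z.2).indicator 1 t.2 := Set.indicator_prod_one
  simp only [hsep]
  rw [setIntegral_mul_mul_haar2]
  rcases not_and_or.mp hz with hz1 | hz2
  · rw [setIntegral_indicator_Ioi_mul_haar1_eq_zero hm1 hz1, zero_mul]
  · rw [setIntegral_indicator_Ioi_mul_haar1_eq_zero hm2 hz2, mul_zero]

lemma localDisc_eq_sum_indicator {ι : Type*} [Fintype ι] (P : ι → ℝ × ℝ) (t : ℝ × ℝ) :
    localDisc P t =
      (∑ k with 0 ≤ (P k).1 ∧ 0 ≤ (P k).2,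
        (Set.Ioi (P k).1 ×ˢ Set.Ioi (P k).2).indicator 1 t) / Fintype.card ι - t.1 * t.2 := by
  have hcount : (countIn P t : ℝ) = ∑ k with 0 ≤ (P k).1 ∧ 0 ≤ (P k).2,
      (Set.Ioi (P k).1 ×ˢ Set.Ioi (P k).2).indicator 1 t := by
    simp only [Set.indicator_apply, Pi.one_apply, Finset.sum_boole, Finset.filter_filter, countIn]
    congr 3 with k
    simp only [Set.mem_prod, Set.mem_Ioi]
    tauto
  rw [localDisc, hcount]

lemma haarCoeff_eq_sum_indicator {ι : Type*} [Fintype ι] (P : ι → ℝ × ℝ) (j : ℤ × ℤ)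
    (m : ℕ × ℕ) :
    haarCoeff P j m =
      (∑ k with 0 ≤ (P k).1 ∧ 0 ≤ (P k).2, ∫ t in Set.Icc (0 : ℝ × ℝ) 1,
        (Set.Ioi (P k).1 ×ˢ Set.Ioi (P k).2).indicator 1 t * haar2 j m t) / Fintype.card ι -
        ∫ t in Set.Icc (0 : ℝ × ℝ) 1, t.1 * t.2 * haar2 j m t := by
  have hquadrant (k : ι) : IntegrableOn ((Set.Ioi (P k).1 ×ˢ Set.Ioi (P k).2).indicator 1)
      (Set.Icc (0 : ℝ × ℝ) 1) :=
    IntegrableOn.indicator (continuous_const (y := (1 : ℝ))).integrableOn_Icc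
      (measurableSet_Ioi.prod measurableSet_Ioi)
  have hprod : IntegrableOn (fun t : ℝ × ℝ ↦ t.1 * t.2) (Set.Icc 0 1) :=
    (continuous_fst.mul continuous_snd).integrableOn_Icc
  have hterm (k : ι) := integrableOn_mul_haar2 (hquadrant k) j m
  simp only [haarCoeff, localDisc_eq_sum_indicator, sub_mul, div_mul_eq_mul_div, Finset.sum_mul]
  rw [integral_sub ((integrable_finsetSum _ fun k _ ↦ hterm k).div_const _)
      (integrableOn_mul_haar2 hprod j m),
    integral_div, integral_finsetSum _ fun k _ ↦ hterm k]

theorem statement6_general {ι : Type*} [Fintype ι] [Nonempty ι] (P : ι → ℝ × ℝ) (j1 j2 m1 m2 : ℕ)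
    (hm1 : m1 < 2 ^ j1) (hm2 : m2 < 2 ^ j2)
    (hempty : ∀ k, P k ∉
      Set.Ioo ((m1 : ℝ) / 2 ^ j1) ((m1 + 1 : ℝ) / 2 ^ j1) ×ˢ
        Set.Ioo ((m2 : ℝ) / 2 ^ j2) ((m2 + 1 : ℝ) / 2 ^ j2)) :
    haarCoeff P ((j1 : ℤ), (j2 : ℤ)) (m1, m2) = -(1 / 2 ^ (2 * (j1 + j2 + 2))) := by
  simp only [← interior_Ico, ← dyadicI_natCast] at hempty
  rw [haarCoeff_eq_sum_indicator,
    Finset.sum_eq_zero fun k _ ↦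
      setIntegral_indicator_quadrant_mul_haar2_eq_zero hm1 hm2 (hempty k),
    setIntegral_fst_mul_snd_mul_haar2 hm1 hm2, zero_div, zero_sub]

/-- Haar coefficients of the local discrepancy of `R_{n,σ}` for `0 ≤ j₁, j₂ ≤ n`,
`j₁ + j₂ ≥ n - 1`, whenever no point of `R_{n,σ}` lies in the interior of the
dyadic box `I_{j,m}`: `|μ_{j,m}| = 2^{-2(j₁+j₂+2)}`. -/
theorem statement6 (n : ℕ) (hn : 0 < n) (σ : Fin n → Bool)
    (j1 j2 : ℕ) (hj1 : j1 ≤ n) (hj2 : j2 ≤ n) (hj : n ≤ j1 + j2 + 1)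
    (m1 m2 : ℕ) (hm1 : m1 < 2 ^ j1) (hm2 : m2 < 2 ^ j2)
    (hempty : ∀ t : Fin n → Bool,
      hammersleyShifted n σ t ∉
        Set.Ioo ((m1 : ℝ) / 2 ^ j1) ((m1 + 1 : ℝ) / 2 ^ j1) ×ˢ
          Set.Ioo ((m2 : ℝ) / 2 ^ j2) ((m2 + 1 : ℝ) / 2 ^ j2)) :
    |haarCoeff (hammersleyShifted n σ) ((j1 : ℤ), (j2 : ℤ)) (m1, m2)| =
      1 / 2 ^ (2 * (j1 + j2 + 2)) := by
  rw [statement6_general _ j1 j2 m1 m2 hm1 hm2 hempty, abs_neg, abs_of_nonneg (by positivity)]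
end

section
/- Let n ∈ ℕ, σ ∈ {0,1}^n, and let μ_{j,m} be the Haar coefficients of the local discrepancy of the digit shifted Hammersley point set R_{n,σ} with N = 2^n points. If j = (−1,k) or j = (k,−1) with k ∈ ℕ_0 and k < n, then |μ_{j,m}| ≤ 2^{−(n+k)} for all m ∈ D_j. -/
open MeasureTheory

/-!
Integrating the counting function against `h_{-1,0} ⊗ h_{k,m}` turns the Haar coefficient into a sum
of `(1 - x) * hat (2 ^ k * y - m)` over the points `(x, y)`, since the hat function is the primitive
of the Haar function.  The hat vanishes unless the `k` leading digits of `y` are those of `m`;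
peeling them off reduces to `k = 0` at the price of lowering the weight `1 - x` by the same small
constant at every remaining point.  For `k = 0`, complementing all digits maps `(x, y)` to
`(1 - δ - x, 1 - δ - y)` with `δ = 2 ^ (-n)`.  The weights of such a pair add up to a constant,
while the values of the symmetric, 1-Lipschitz hat differ by at most `δ`, so the sum is `2 ^ n / 8`
up to an error of at most `1`, and `2 ^ n / 8` is what the term `t₁ t₂` of the discrepancy cancels.
The case `(k, -1)` follows by transposition, which reverses the shift.
-/

/-- The hat function on `[0, 1]` with peak `1 / 2`, extended by zero.  Scaled to a dyadic interval
it is the primitive of a Haar function: `∫₀ᵖ h_{k,m} = hat (2 ^ k * p - m) / 2 ^ k`. -/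
noncomputable def hat (u : ℝ) : ℝ := max 0 (min u (1 - u))

section Hat

lemma hat_of_nonpos {u : ℝ} (hu : u ≤ 0) : hat u = 0 :=
  max_eq_left ((min_le_left _ _).trans hu)

lemma hat_of_one_le {u : ℝ} (hu : 1 ≤ u) : hat u = 0 :=
  max_eq_left ((min_le_right _ _).trans (by linarith))

lemma hat_one_sub (u : ℝ) : hat (1 - u) = hat u := by
  rw [hat, hat, sub_sub_cancel, min_comm]

lemma abs_hat_sub_hat_le (u v : ℝ) : |hat u - hat v| ≤ |u - v| := by
  calc |hat u - hat v| ≤ |min u (1 - u) - min v (1 - v)| := by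
        simpa only [hat, max_comm (0 : ℝ)] using abs_max_sub_max_le_abs _ _ (0 : ℝ)
    _ ≤ max |u - v| |(1 - u) - (1 - v)| := abs_min_sub_min_le_max _ _ _ _
    _ = |u - v| := by rw [sub_sub_sub_cancel_left, abs_sub_comm v u, max_self]

lemma hat_half_add_hat_one_add_half {u : ℝ} (h0 : 0 ≤ u) (h1 : u ≤ 1) :
    hat (u / 2) + hat ((1 + u) / 2) = 1 / 2 := by
  rw [hat, hat, min_eq_left (by linarith), min_eq_right (by linarith), max_eq_right (by linarith),
    max_eq_right (by linarith)]
  ring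

lemma hat_mul_sub_div {s : ℝ} (hs : 0 < s) (p m : ℝ) :
    hat (s * p - m) / s = max 0 (min (p - m / s) ((m + 1) / s - p)) := by
  rw [hat, ← max_div_div_right hs.le, ← min_div_div_right hs.le, zero_div]
  congr 2 <;> field_simp
  ring

end Hat

section HaarIntegrals

lemma integrableOn_haar1 (j : ℤ) (m : ℕ) : IntegrableOn (haar1 j m) (Set.Icc 0 1) := by
  have hmeas : Measurable (haar1 j m) := by
    unfold haar1
    split_ifs
    · exact Measurable.ite measurableSet_Ico measurable_const measurable_const
    · exact Measurable.ite measurableSet_Ico measurable_const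
        (Measurable.ite measurableSet_Ico measurable_const measurable_const)
  refine Measure.integrableOn_of_bounded (M := 1) (by simp) hmeas.aestronglyMeasurable
    (.of_forall fun x => ?_)
  unfold haar1
  split_ifs <;> norm_num

lemma haar1_neg_one_eq_indicator : haar1 (-1) 0 = (Set.Ico 0 1).indicator 1 := by
  ext x
  simp [haar1, Set.indicator_apply]

lemma haar1_natCast_eq_indicator_sub (k m : ℕ) :
    haar1 k m = (Set.Ico ((2 * m : ℝ) / 2 ^ (k + 1)) ((2 * m + 1) / 2 ^ (k + 1))).indicator 1 -
      (Set.Ico ((2 * m + 1 : ℝ) / 2 ^ (k + 1)) ((2 * m + 2) / 2 ^ (k + 1))).indicator 1 := by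
  ext x
  have hk : (k : ℤ) ≠ -1 := by lia
  simp only [haar1, if_neg hk, Int.toNat_natCast, Pi.sub_apply, Set.indicator_apply, Set.mem_Ico,
    Pi.one_apply]
  split_ifs <;> grind

lemma integrableOn_indicator_one_mul {f : ℝ → ℝ} {s t : Set ℝ} (hf : IntegrableOn f t)
    (hs : MeasurableSet s) : IntegrableOn (fun x => s.indicator 1 x * f x) t := by
  have hind : (fun x => s.indicator 1 x * f x) = s.indicator f := by
    ext x
    by_cases hx : x ∈ s <;> simp [hx]
  exact hind ▸ hf.indicator hs

lemma setIntegral_mul_indicator_Ico {f : ℝ → ℝ} {a b : ℝ} (ha : 0 ≤ a) (hab : a ≤ b) (hb : b ≤ 1) :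
    ∫ x in Set.Icc 0 1, f x * (Set.Ico a b).indicator 1 x = ∫ x in a..b, f x := by
  have hsub : Set.Ico a b ⊆ Set.Icc 0 1 := Set.Ico_subset_Icc_self.trans (Set.Icc_subset_Icc ha hb)
  have hind : (fun x => f x * (Set.Ico a b).indicator 1 x) = (Set.Ico a b).indicator f := by
    ext x
    simp [Set.indicator_apply]
  rw [hind, setIntegral_indicator measurableSet_Ico, Set.inter_eq_right.2 hsub,
    integral_Ico_eq_integral_Ioc, intervalIntegral.integral_of_le hab]

lemma setIntegral_mul_haar1_neg_one (f : ℝ → ℝ) :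
    ∫ x in Set.Icc 0 1, f x * haar1 (-1) 0 x = ∫ x in (0 : ℝ)..1, f x := by
  rw [haar1_neg_one_eq_indicator, setIntegral_mul_indicator_Ico le_rfl zero_le_one le_rfl]

lemma setIntegral_mul_haar1_natCast {f : ℝ → ℝ} (hf : IntegrableOn f (Set.Icc 0 1)) {k m : ℕ}
    (hm : m < 2 ^ k) :
    ∫ x in Set.Icc 0 1, f x * haar1 k m x =
      (∫ x in ((2 * m : ℝ) / 2 ^ (k + 1))..((2 * m + 1) / 2 ^ (k + 1)), f x) -
        ∫ x in ((2 * m + 1 : ℝ) / 2 ^ (k + 1))..((2 * m + 2) / 2 ^ (k + 1)), f x := by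
  have hleft : (2 * m : ℝ) / 2 ^ (k + 1) ≤ (2 * m + 1) / 2 ^ (k + 1) := by gcongr; simp
  have hright : (2 * m + 1 : ℝ) / 2 ^ (k + 1) ≤ (2 * m + 2) / 2 ^ (k + 1) := by gcongr; simp
  have hend : (2 * m + 2 : ℝ) / 2 ^ (k + 1) ≤ 1 := by
    have hm' : (m + 1 : ℝ) ≤ 2 ^ k := mod_cast hm
    rw [div_le_one (by positivity), pow_succ]
    linarith
  have hint (a b : ℝ) :
      IntegrableOn (fun x => f x * (Set.Ico a b).indicator 1 x) (Set.Icc 0 1) := by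
    simpa only [mul_comm] using integrableOn_indicator_one_mul hf measurableSet_Ico
  simp only [haar1_natCast_eq_indicator_sub, Pi.sub_apply, mul_sub]
  rw [integral_sub (hint _ _) (hint _ _),
    setIntegral_mul_indicator_Ico (by positivity) hleft (hright.trans hend),
    setIntegral_mul_indicator_Ico (by positivity) hright hend]

lemma intervalIntegral_indicator_Ioi_one {a b : ℝ} (hab : a ≤ b) (p : ℝ) :
    ∫ x in a..b, (Set.Ioi p).indicator 1 x = max (b - max a p) 0 := by
  rw [intervalIntegral.integral_of_le hab, integral_indicator_one measurableSet_Ioi,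
    measureReal_restrict_apply measurableSet_Ioi, Set.inter_comm, Set.Ioc_inter_Ioi,
    Real.volume_real_Ioc]

lemma integrableOn_indicator_Ioi_one (p : ℝ) :
    IntegrableOn ((Set.Ioi p).indicator (1 : ℝ → ℝ)) (Set.Icc 0 1) :=
  (integrable_const (1 : ℝ)).indicator measurableSet_Ioi

lemma setIntegral_indicator_Ioi_mul_haar1_neg_one {p : ℝ} (h0 : 0 ≤ p) (h1 : p ≤ 1) :
    ∫ x in Set.Icc 0 1, (Set.Ioi p).indicator 1 x * haar1 (-1) 0 x = 1 - p := by
  rw [setIntegral_mul_haar1_neg_one, intervalIntegral_indicator_Ioi_one zero_le_one,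
    max_eq_right h0, max_eq_left (sub_nonneg.2 h1)]

lemma setIntegral_indicator_Ioi_mul_haar1_natCast {k m : ℕ} (hm : m < 2 ^ k) (p : ℝ) :
    ∫ x in Set.Icc 0 1, (Set.Ioi p).indicator 1 x * haar1 k m x =
      -(hat (2 ^ k * p - m) / 2 ^ k) := by
  set δ : ℝ := 1 / 2 ^ (k + 1) with hδ
  have hδ0 : 0 < δ := by positivity
  have hmid : (2 * m + 1 : ℝ) / 2 ^ (k + 1) = m / 2 ^ k + δ := by rw [hδ, pow_succ]; field_simp
  have hleft : (2 * m : ℝ) / 2 ^ (k + 1) = m / 2 ^ k := by rw [pow_succ]; field_simp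
  have hright : (2 * m + 2 : ℝ) / 2 ^ (k + 1) = m / 2 ^ k + 2 * δ := by
    rw [hδ, pow_succ]; field_simp
  have hend : (m + 1 : ℝ) / 2 ^ k = m / 2 ^ k + 2 * δ := by rw [hδ, pow_succ]; field_simp
  rw [setIntegral_mul_haar1_natCast (integrableOn_indicator_Ioi_one p) hm, hleft, hmid, hright,
    intervalIntegral_indicator_Ioi_one (by linarith),
    intervalIntegral_indicator_Ioi_one (by linarith), hat_mul_sub_div (by positivity), hend]
  grind

lemma setIntegral_id_mul_haar1_neg_one : ∫ x in Set.Icc 0 1, x * haar1 (-1) 0 x = 1 / 2 := by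
  rw [setIntegral_mul_haar1_neg_one, integral_id]
  norm_num

lemma setIntegral_id_mul_haar1_natCast {k m : ℕ} (hm : m < 2 ^ k) :
    ∫ x in Set.Icc 0 1, x * haar1 k m x = -(1 / (4 * 2 ^ k * 2 ^ k)) := by
  have hid : IntegrableOn (fun x : ℝ => x) (Set.Icc 0 1) := continuous_id.integrableOn_Icc
  rw [setIntegral_mul_haar1_natCast hid hm]
  simp only [integral_id, pow_succ]
  field_simp
  ring

end HaarIntegrals

section HaarCoefficients

variable {ι κ : Type*} [Fintype ι] [Fintype κ] (P : ι → ℝ × ℝ)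

lemma countIn_eq_sum_indicator (hP : ∀ i, 0 ≤ P i) (t : ℝ × ℝ) :
    (countIn P t : ℝ) =
      ∑ i, (Set.Ioi (P i).1).indicator 1 t.1 * (Set.Ioi (P i).2).indicator 1 t.2 := by
  rw [countIn, Finset.card_filter, Nat.cast_sum]
  refine Finset.sum_congr rfl fun i _ => ?_
  have h1 : 0 ≤ (P i).1 := (hP i).1
  have h2 : 0 ≤ (P i).2 := (hP i).2
  simp only [Set.indicator_apply, Set.mem_Ioi, Pi.one_apply, h1, h2, true_and]
  split_ifs <;> simp_all

lemma haarCoeff_eq_sum_sub (hP : ∀ i, 0 ≤ P i) (j : ℤ × ℤ) (m : ℕ × ℕ) :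
    haarCoeff P j m =
      (∑ i, (∫ x in Set.Icc 0 1, (Set.Ioi (P i).1).indicator 1 x * haar1 j.1 m.1 x) *
        ∫ x in Set.Icc 0 1, (Set.Ioi (P i).2).indicator 1 x * haar1 j.2 m.2 x) / Fintype.card ι -
      (∫ x in Set.Icc 0 1, x * haar1 j.1 m.1 x) * ∫ x in Set.Icc 0 1, x * haar1 j.2 m.2 x := by
  have hvol : (volume.restrict (Set.Icc (0 : ℝ × ℝ) 1)) =
      (volume.restrict (Set.Icc (0 : ℝ) 1)).prod (volume.restrict (Set.Icc (0 : ℝ) 1)) := by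
    rw [Measure.prod_restrict, ← Measure.volume_eq_prod, Set.Icc_prod_Icc]
    rfl
  have hintegrand (t : ℝ × ℝ) : localDisc P t * haar2 j m t =
      (∑ i, ((Set.Ioi (P i).1).indicator 1 t.1 * haar1 j.1 m.1 t.1) *
        ((Set.Ioi (P i).2).indicator 1 t.2 * haar1 j.2 m.2 t.2)) / Fintype.card ι -
      (t.1 * haar1 j.1 m.1 t.1) * (t.2 * haar1 j.2 m.2 t.2) := by
    simp only [localDisc, haar2, countIn_eq_sum_indicator P hP,
      mul_mul_mul_comm _ (haar1 j.1 m.1 _), ← Finset.sum_mul]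
    ring
  have hind (p : ℝ) (j : ℤ) (m : ℕ) :
      IntegrableOn (fun x => (Set.Ioi p).indicator 1 x * haar1 j m x) (Set.Icc 0 1) :=
    integrableOn_indicator_one_mul (integrableOn_haar1 j m) measurableSet_Ioi
  have hid (j : ℤ) (m : ℕ) : IntegrableOn (fun x => x * haar1 j m x) (Set.Icc 0 1) :=
    (integrableOn_haar1 j m).continuousOn_mul continuousOn_id isCompact_Icc
  simp only [haarCoeff, hintegrand]
  rw [hvol, integral_sub
      ((integrable_finsetSum _ fun i _ => (hind _ _ _).mul_prod (hind _ _ _)).div_const _)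
      ((hid _ _).mul_prod (hid _ _)),
    integral_div, integral_finsetSum _ fun i _ => (hind _ _ _).mul_prod (hind _ _ _)]
  simp only [← integral_prod_mul]

lemma haarCoeff_neg_one_natCast (hP : ∀ i, P i ∈ Set.Icc 0 1) {k m : ℕ} (hm : m < 2 ^ k) :
    haarCoeff P (-1, k) (0, m) = 1 / (8 * 2 ^ k * 2 ^ k) -
      (∑ i, (1 - (P i).1) * hat (2 ^ k * (P i).2 - m)) / (Fintype.card ι * 2 ^ k) := by
  have hfst (i : ι) := setIntegral_indicator_Ioi_mul_haar1_neg_one (hP i).1.1 (hP i).2.1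
  simp only [haarCoeff_eq_sum_sub P fun i => (hP i).1, hfst,
    setIntegral_indicator_Ioi_mul_haar1_natCast hm, setIntegral_id_mul_haar1_neg_one,
    setIntegral_id_mul_haar1_natCast hm, mul_neg, mul_div_assoc', Finset.sum_neg_distrib,
    ← Finset.sum_div]
  ring

lemma haarCoeff_comp_equiv (e : κ ≃ ι) : haarCoeff (P ∘ e) = haarCoeff P := by
  have hcount : countIn (P ∘ e) = countIn P := by
    ext t
    simp only [countIn, Finset.card_filter, Function.comp_apply]
    exact e.sum_comp fun i => if 0 ≤ (P i).1 ∧ (P i).1 < t.1 ∧ 0 ≤ (P i).2 ∧ (P i).2 < t.2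
      then 1 else 0
  ext j m
  simp only [haarCoeff, localDisc, hcount, Fintype.card_congr e]

lemma haarCoeff_swap_comp (j : ℤ × ℤ) (m : ℕ × ℕ) :
    haarCoeff (Prod.swap ∘ P) j.swap m.swap = haarCoeff P j m := by
  have hintegrand (t : ℝ × ℝ) : localDisc (Prod.swap ∘ P) t.swap * haar2 j.swap m.swap t.swap =
      localDisc P t * haar2 j m t := by
    have hcount : countIn (Prod.swap ∘ P) t.swap = countIn P t := by
      simp only [countIn, Function.comp_apply, Prod.fst_swap, Prod.snd_swap]
      congr 1
      ext i
      simp only [Finset.mem_filter]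
      tauto
    simp only [localDisc, haar2, hcount, Prod.fst_swap, Prod.snd_swap]
    ring
  have hsquare : Set.Icc (0 : ℝ × ℝ) 1 = Set.Icc 0 1 ×ˢ Set.Icc 0 1 := Set.Icc_prod_eq _ _
  simp only [haarCoeff, ← hintegrand]
  rw [hsquare, Measure.volume_eq_prod]
  exact (setIntegral_prod_swap _ _ fun t =>
    localDisc (Prod.swap ∘ P) t * haar2 j.swap m.swap t).symm

end HaarCoefficients

section Hammersley

variable {n : ℕ}

lemma hammersleyShifted_nonneg (σ t : Fin n → Bool) : 0 ≤ hammersleyShifted n σ t := by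
  have hbval (b : Bool) : 0 ≤ bval b := by cases b <;> simp [bval]
  have hsum (b : Fin n → Bool) (e : Fin n → ℕ) : 0 ≤ ∑ i, bval (b i) / 2 ^ e i :=
    Finset.sum_nonneg fun i _ => div_nonneg (hbval _) (by positivity)
  exact ⟨hsum _ _, hsum _ _⟩

lemma hammersleyShifted_cons (σ : Fin (n + 1) → Bool) (d : Bool) (t : Fin n → Bool) :
    hammersleyShifted (n + 1) σ (Fin.cons d t) =
      (bval d / 2 ^ (n + 1) + (hammersleyShifted n (Fin.tail σ) t).1,
        (bval (d != σ 0) + (hammersleyShifted n (Fin.tail σ) t).2) / 2) := by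
  simp only [hammersleyShifted, Fin.sum_univ_succ, Fin.cons_zero, Fin.cons_succ, Fin.val_zero,
    Fin.val_succ, Fin.tail, add_div, Finset.sum_div, div_div, ← pow_succ, Nat.sub_zero, zero_add,
    pow_one, Nat.add_sub_add_right]

lemma hammersleyShifted_compl (σ t : Fin n → Bool) :
    hammersleyShifted n σ tᶜ =
      (1 - 1 / 2 ^ n - (hammersleyShifted n σ t).1,
        1 - 1 / 2 ^ n - (hammersleyShifted n σ t).2) := by
  induction n with
  | zero => simp [hammersleyShifted]
  | succ n ih =>
    have hbval (b : Bool) : bval (!b) = 1 - bval b := by cases b <;> simp [bval]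
    have hcompl : tᶜ = Fin.cons (!t 0) (Fin.tail t)ᶜ := by
      ext i
      cases i using Fin.cases <;> simp [Fin.tail]
    rw [← Fin.cons_self_tail t, hammersleyShifted_cons, Fin.cons_self_tail, hcompl,
      hammersleyShifted_cons, ih, Bool.not_bne, hbval, hbval]
    ext <;> simp only [pow_succ] <;> field_simp <;> ring

lemma hammersleyShifted_le (σ t : Fin n → Bool) :
    hammersleyShifted n σ t ≤ (1 - 1 / 2 ^ n, 1 - 1 / 2 ^ n) := by
  have h := hammersleyShifted_nonneg σ tᶜ
  rw [hammersleyShifted_compl] at h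
  exact ⟨sub_nonneg.1 h.1, sub_nonneg.1 h.2⟩

lemma hammersleyShifted_mem_Icc (σ t : Fin n → Bool) :
    hammersleyShifted n σ t ∈ Set.Icc 0 1 := by
  have hle : 1 - 1 / 2 ^ n ≤ (1 : ℝ) := sub_le_self _ (by positivity)
  exact ⟨hammersleyShifted_nonneg σ t,
    (hammersleyShifted_le σ t).trans (Prod.mk_le_mk.2 ⟨hle, hle⟩)⟩

/-- The reindexing of digit vectors under which transposing the point set shifted by `σ` yields the
one shifted by the reversal of `σ`: the reversed digits `t i ⊕ σ i` are the new digit vector. -/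
def reverseShift (σ : Fin n → Bool) : (Fin n → Bool) ≃ (Fin n → Bool) where
  toFun t i := t i.rev != σ i.rev
  invFun t i := t i.rev != σ i
  left_inv t := by ext i; simp
  right_inv t := by ext i; simp

lemma hammersleyShifted_comp_reverseShift (σ : Fin n → Bool) :
    hammersleyShifted n (σ ∘ Fin.rev) ∘ reverseShift σ = Prod.swap ∘ hammersleyShifted n σ := by
  ext t
  · simp only [hammersleyShifted, reverseShift, Function.comp_apply, Equiv.coe_fn_mk, Prod.fst_swap]
    rw [← Equiv.sum_comp Fin.revPerm]
    refine Finset.sum_congr rfl fun i _ => ?_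
    rw [Fin.revPerm_apply, Fin.rev_rev, Fin.val_rev, Nat.sub_sub_self i.isLt]
  · simp only [hammersleyShifted, reverseShift, Function.comp_apply, Equiv.coe_fn_mk, Prod.snd_swap]
    rw [← Equiv.sum_comp Fin.revPerm]
    refine Finset.sum_congr rfl fun i _ => ?_
    have hdigit : ((t i != σ i) != σ i) = t i := by simp
    have hpow : n - (i + 1) + 1 = n - i := by lia
    rw [Fin.revPerm_apply, Fin.rev_rev, Fin.val_rev, hdigit, hpow]

lemma sum_boolVec_cons {M : Type*} [AddCommMonoid M] (f : (Fin (n + 1) → Bool) → M) (d : Bool) :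
    ∑ t, f t = ∑ t : Fin n → Bool, (f (Fin.cons d t) + f (Fin.cons (!d) t)) := by
  rw [← Equiv.sum_comp (Fin.consEquiv fun _ => Bool), Fintype.sum_prod_type, Fintype.sum_bool,
    ← Finset.sum_add_distrib]
  cases d <;> simp [Fin.consEquiv, add_comm]

lemma sum_hat_hammersleyShifted_snd (σ : Fin (n + 1) → Bool) :
    ∑ t, hat (hammersleyShifted (n + 1) σ t).2 = 2 ^ (n + 1) / 4 := by
  have hpair (t : Fin n → Bool) :
      hat (hammersleyShifted (n + 1) σ (Fin.cons (σ 0) t)).2 +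
        hat (hammersleyShifted (n + 1) σ (Fin.cons (!σ 0) t)).2 = 1 / 2 := by
    have hmem := hammersleyShifted_mem_Icc (Fin.tail σ) t
    simpa [hammersleyShifted_cons, bval] using hat_half_add_hat_one_add_half hmem.1.2 hmem.2.2
  rw [sum_boolVec_cons _ (σ 0), Finset.sum_congr rfl fun t _ => hpair t]
  simp only [Finset.sum_const, Finset.card_univ, Fintype.card_pi, Fintype.card_bool,
    Finset.prod_const, Fintype.card_fin, nsmul_eq_mul, Nat.cast_pow, Nat.cast_ofNat, pow_succ]
  ring

/-- The two weights in a pair of complementary digit vectors add up to `1 + 1 / 2 ^ n - 2 * c`. -/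
lemma two_mul_sum_mul_hat_hammersleyShifted (σ : Fin n → Bool) (c : ℝ) :
    2 * ∑ t, (1 - c - (hammersleyShifted n σ t).1) * hat (hammersleyShifted n σ t).2 =
      (1 + 1 / 2 ^ n - 2 * c) * ∑ t, hat (hammersleyShifted n σ t).2 +
        ∑ t, (1 - c - (hammersleyShifted n σ tᶜ).1) *
          (hat (hammersleyShifted n σ tᶜ).2 - hat (hammersleyShifted n σ t).2) := by
  have hcompl := compl_bijective.sum_comp fun t : Fin n → Bool =>
    (1 - c - (hammersleyShifted n σ t).1) * hat (hammersleyShifted n σ t).2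
  rw [two_mul]
  nth_rw 1 [← hcompl]
  rw [Finset.mul_sum, ← Finset.sum_add_distrib, ← Finset.sum_add_distrib]
  refine Finset.sum_congr rfl fun t _ => ?_
  rw [hammersleyShifted_compl]
  ring

lemma abs_sum_mul_hat_compl_sub_le (σ : Fin n → Bool) {c : ℝ} (hc0 : 0 ≤ c)
    (hc : c ≤ 1 / 2 ^ n) :
    |∑ t, (1 - c - (hammersleyShifted n σ tᶜ).1) *
      (hat (hammersleyShifted n σ tᶜ).2 - hat (hammersleyShifted n σ t).2)| ≤ 1 := by
  have hterm (t : Fin n → Bool) : |(1 - c - (hammersleyShifted n σ tᶜ).1) *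
      (hat (hammersleyShifted n σ tᶜ).2 - hat (hammersleyShifted n σ t).2)| ≤ 1 / 2 ^ n := by
    have hweight : |1 - c - (hammersleyShifted n σ tᶜ).1| ≤ 1 := by
      have h0 : 0 ≤ (hammersleyShifted n σ tᶜ).1 := (hammersleyShifted_nonneg σ tᶜ).1
      have h1 : (hammersleyShifted n σ tᶜ).1 ≤ 1 - 1 / 2 ^ n := (hammersleyShifted_le σ tᶜ).1
      rw [abs_le]
      constructor <;> linarith
    have hhat : |hat (hammersleyShifted n σ tᶜ).2 - hat (hammersleyShifted n σ t).2| ≤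
        1 / 2 ^ n := by
      have hshift (y : ℝ) : 1 - (1 - 1 / 2 ^ n - y) - y = 1 / 2 ^ n := by ring
      rw [hammersleyShifted_compl, ← hat_one_sub]
      refine (abs_hat_sub_hat_le _ _).trans_eq ?_
      rw [hshift, abs_of_pos (by positivity)]
    simpa only [abs_mul, one_mul] using mul_le_mul hweight hhat (abs_nonneg _) zero_le_one
  calc _ ≤ ∑ _ : Fin n → Bool, (1 / 2 ^ n : ℝ) :=
        (Finset.abs_sum_le_sum_abs _ _).trans (Finset.sum_le_sum fun t _ => hterm t)
    _ = 1 := by simp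

lemma abs_sum_mul_hat_level_zero_sub_le (σ : Fin n → Bool) {c : ℝ} (hc0 : 0 ≤ c)
    (hc : c ≤ 1 / 2 ^ n) :
    |∑ t, (1 - c - (hammersleyShifted n σ t).1) * hat (hammersleyShifted n σ t).2 - 2 ^ n / 8| ≤
      1 := by
  cases n with
  | zero => norm_num [hammersleyShifted, hat_of_nonpos]
  | succ n =>
    have htwo := two_mul_sum_mul_hat_hammersleyShifted σ c
    have hdefect := abs_sum_mul_hat_compl_sub_le σ hc0 hc
    have hmain : |(1 + 1 / 2 ^ (n + 1) - 2 * c) * (2 ^ (n + 1) / 4) - 2 ^ (n + 1) / 4| ≤ 1 / 4 := by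
      have hcancel : 1 / 2 ^ (n + 1) * (2 : ℝ) ^ (n + 1) = 1 := by field_simp
      have hc' : c * 2 ^ (n + 1) ≤ 1 := (le_div_iff₀ (by positivity)).1 hc
      have hc0' : 0 ≤ c * 2 ^ (n + 1) := by positivity
      rw [abs_le]
      constructor <;> linarith
    rw [sum_hat_hammersleyShifted_snd] at htwo
    rw [abs_le] at *
    constructor <;> linarith [hdefect.1, hdefect.2, hmain.1, hmain.2]

lemma exists_bval_mul_two_pow_add {k m : ℕ} (hm : m < 2 ^ (k + 1)) :
    ∃ (s : Bool) (m' : ℕ), m' < 2 ^ k ∧ (m : ℝ) = bval s * 2 ^ k + m' := by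
  rcases lt_or_ge m (2 ^ k) with h | h
  · exact ⟨false, m, h, by simp [bval]⟩
  · exact ⟨true, m - 2 ^ k, by lia, by simp [bval, Nat.cast_sub h]⟩

lemma hat_two_pow_mul_eq_zero_of_not {k m : ℕ} (hm : m < 2 ^ k) (s : Bool) {y : ℝ} (h0 : 0 ≤ y)
    (h1 : y ≤ 1) : hat (2 ^ k * (bval (!s) - bval s + y) - m) = 0 := by
  have hm' : (m + 1 : ℝ) ≤ 2 ^ k := mod_cast hm
  have hy0 : 0 ≤ 2 ^ k * y := by positivity
  have hy1 : 2 ^ k * y ≤ 2 ^ k := mul_le_of_le_one_right (by positivity) h1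
  cases s
  · have hbval : bval (!false) - bval false = 1 := by simp [bval]
    exact hat_of_one_le (by rw [hbval]; linarith)
  · have hbval : bval (!true) - bval true = -1 := by simp [bval]
    exact hat_of_nonpos (by rw [hbval]; linarith)

lemma sum_mul_hat_hammersleyShifted_succ (σ : Fin (n + 1) → Bool) {k m : ℕ} (hm : m < 2 ^ k)
    (s : Bool) (c : ℝ) :
    ∑ t, (1 - c - (hammersleyShifted (n + 1) σ t).1) *
        hat (2 ^ (k + 1) * (hammersleyShifted (n + 1) σ t).2 - (bval s * 2 ^ k + m)) =
      ∑ t, (1 - (c + bval (s != σ 0) / 2 ^ (n + 1)) - (hammersleyShifted n (Fin.tail σ) t).1) *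
        hat (2 ^ k * (hammersleyShifted n (Fin.tail σ) t).2 - m) := by
  rw [sum_boolVec_cons _ (s != σ 0)]
  refine Finset.sum_congr rfl fun t _ => ?_
  have hmem := hammersleyShifted_mem_Icc (Fin.tail σ) t
  have hvanish := hat_two_pow_mul_eq_zero_of_not hm s hmem.1.2 hmem.2.2
  have hdigit : ((s != σ 0) != σ 0) = s ∧ ((!(s != σ 0)) != σ 0) = !s := by simp
  have harg (d : Bool) (y : ℝ) : 2 ^ (k + 1) * ((bval d + y) / 2) - (bval s * 2 ^ k + m) =
      2 ^ k * (bval d - bval s + y) - m := by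
    ring
  rw [hammersleyShifted_cons, hammersleyShifted_cons, hdigit.1, hdigit.2, harg, harg, hvanish,
    sub_self, zero_add]
  ring

/-- Peeling off leading digits of the second coordinate removes the trailing digits of the first
one; `c` is the value these contribute, and `c ≤ 1 / 2 ^ n` keeps all weights in `[0, 1]`. -/
lemma abs_sum_mul_hat_sub_le (σ : Fin n → Bool) {k m : ℕ} (hm : m < 2 ^ k) {c : ℝ} (hc0 : 0 ≤ c)
    (hc : c ≤ 1 / 2 ^ n) :
    |∑ t, (1 - c - (hammersleyShifted n σ t).1) * hat (2 ^ k * (hammersleyShifted n σ t).2 - m) -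
      2 ^ n / (8 * 2 ^ k)| ≤ 1 := by
  induction k generalizing n m c with
  | zero =>
    obtain rfl : m = 0 := by simpa using hm
    simpa using abs_sum_mul_hat_level_zero_sub_le σ hc0 hc
  | succ k ih =>
    cases n with
    | zero =>
      have hpow : (1 : ℝ) ≤ 8 * 2 ^ (k + 1) :=
        one_le_mul_of_one_le_of_one_le (by norm_num) (one_le_pow₀ one_le_two)
      have hzero : hat (-m) = 0 := hat_of_nonpos (by simp)
      simpa [hammersleyShifted, hzero, abs_of_pos] using inv_le_one_of_one_le₀ hpow
    | succ n =>
      obtain ⟨s, m', hm', hms⟩ := exists_bval_mul_two_pow_add hm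
      have hbval : 0 ≤ bval (s != σ 0) ∧ bval (s != σ 0) ≤ 1 := by
        cases s != σ 0 <;> simp [bval]
      have hc0' : 0 ≤ c + bval (s != σ 0) / 2 ^ (n + 1) :=
        add_nonneg hc0 (div_nonneg hbval.1 (by positivity))
      have hc' : c + bval (s != σ 0) / 2 ^ (n + 1) ≤ 1 / 2 ^ n := by
        calc c + bval (s != σ 0) / 2 ^ (n + 1) ≤ 1 / 2 ^ (n + 1) + 1 / 2 ^ (n + 1) := by
              gcongr
              exact hbval.2
          _ = 1 / 2 ^ n := by field_simp; ring
      have hratio : (2 : ℝ) ^ (n + 1) / (8 * 2 ^ (k + 1)) = 2 ^ n / (8 * 2 ^ k) := by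
        field_simp
        ring
      rw [hms, sum_mul_hat_hammersleyShifted_succ σ hm', hratio]
      exact ih (Fin.tail σ) hm' hc0' hc'

lemma abs_haarCoeff_hammersleyShifted_neg_one_natCast_le (σ : Fin n → Bool) {k m : ℕ}
    (hm : m < 2 ^ k) :
    |haarCoeff (hammersleyShifted n σ) (-1, k) (0, m)| ≤ 1 / 2 ^ (n + k) := by
  have hsum := abs_sum_mul_hat_sub_le σ hm le_rfl (by positivity)
  simp only [sub_zero] at hsum
  set S := ∑ t, (1 - (hammersleyShifted n σ t).1) * hat (2 ^ k * (hammersleyShifted n σ t).2 - m)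
  have hcoeff : haarCoeff (hammersleyShifted n σ) (-1, k) (0, m) =
      (2 ^ n / (8 * 2 ^ k) - S) / 2 ^ (n + k) := by
    have hcard : (Fintype.card (Fin n → Bool) : ℝ) = 2 ^ n := by simp
    rw [haarCoeff_neg_one_natCast _ (hammersleyShifted_mem_Icc σ) hm, hcard, sub_div, pow_add]
    congr 1
    field_simp
  rw [hcoeff, abs_div, abs_sub_comm, abs_of_pos (by positivity : (0 : ℝ) < 2 ^ (n + k))]
  gcongr

end Hammersley

theorem statement8_general (n : ℕ) (σ : Fin n → Bool) (k : ℕ) (m : ℕ) (hm : m < 2 ^ k) :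
    |haarCoeff (hammersleyShifted n σ) (-1, (k : ℤ)) (0, m)| ≤ 1 / 2 ^ (n + k) ∧
    |haarCoeff (hammersleyShifted n σ) ((k : ℤ), -1) (m, 0)| ≤ 1 / 2 ^ (n + k) := by
  refine ⟨abs_haarCoeff_hammersleyShifted_neg_one_natCast_le σ hm, ?_⟩
  rw [← haarCoeff_swap_comp, ← hammersleyShifted_comp_reverseShift, haarCoeff_comp_equiv]
  exact abs_haarCoeff_hammersleyShifted_neg_one_natCast_le (σ ∘ Fin.rev) hm

/-- Haar coefficients of the local discrepancy of `R_{n,σ}` for `j = (-1,k)` or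
`j = (k,-1)` with `0 ≤ k < n`: `|μ_{j,m}| ≤ 2^{-(n+k)}`. -/
theorem statement8 (n : ℕ) (hn : 0 < n) (σ : Fin n → Bool)
    (k : ℕ) (hk : k < n) (m : ℕ) (hm : m < 2 ^ k) :
    |haarCoeff (hammersleyShifted n σ) (-1, (k : ℤ)) (0, m)| ≤ 1 / 2 ^ (n + k) ∧
    |haarCoeff (hammersleyShifted n σ) ((k : ℤ), -1) (m, 0)| ≤ 1 / 2 ^ (n + k) :=
  statement8_general n σ k m hm
end

section
/- Let n ∈ ℕ and σ ∈ {0,1}^n. For every t ∈ [0,1]^2, the counting functions of the symmetrized point set R_{n,σ}^{sym} and of the multiset ~R_{n,σ}^{sym} satisfy A([0,t), ~R_{n,σ}^{sym}) ≤ A([0,t), R_{n,σ}^{sym}) ≤ A([0,t), ~R_{n,σ}^{sym}) + 1. -/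
open MeasureTheory

/-!
With `σ*` the complement of `σ`, digitwise `y(σ) + y(σ*) = 1/2 + ⋯ + 1/2^n = 1 - 1/2^n`. Hence
reflecting `R_{n,σ}` in the line `y = 1/2` gives `R_{n,σ*}` raised by `1/2^n`. Raising the points
can only remove some of them from `[0,t)`, and the removed ones have heights in
`[t₂ - 1/2^n, t₂)`. The heights in `R_{n,σ*}` are distinct multiples of `1/2^n`, so at most one
point is removed.
-/

section Counting

variable {ι : Type*} [Fintype ι]

lemma countIn_bool_prod (P : Bool × ι → ℝ × ℝ) (t : ℝ × ℝ) :
    countIn P t = countIn (fun k => P (false, k)) t + countIn (fun k => P (true, k)) t := by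
  simp only [countIn, Finset.card_filter, Fintype.sum_prod_type, Fintype.sum_bool, add_comm]

lemma card_filter_mem_Ico_le_one_of_pairwise {G : Type*} [AddCommGroup G] [LinearOrder G]
    [IsOrderedAddMonoid G] {f : ι → G} {δ : G} (hsep : Pairwise fun k l => δ ≤ |f k - f l|)
    (c : G) : (Finset.univ.filter fun k => f k ∈ Set.Ico (c - δ) c).card ≤ 1 := by
  simp only [Finset.card_le_one, Finset.mem_filter_univ, Set.mem_Ico]
  have sub_lt {x y : G} (hx : x < c) (hy : c - δ ≤ y) : x - y < δ :=
    sub_lt_iff_lt_add.mpr (hx.trans_le (sub_le_iff_le_add'.mp hy))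
  rintro k ⟨hk, hkc⟩ l ⟨hl, hlc⟩
  by_contra hkl
  exact (hsep hkl).not_gt (abs_sub_lt_iff.mpr ⟨sub_lt hkc hl, sub_lt hlc hk⟩)

variable {P : ι → ℝ × ℝ} {δ : ℝ}

lemma countIn_add_snd_le (hP : ∀ k, 0 ≤ (P k).2) (hδ : 0 ≤ δ) (t : ℝ × ℝ) :
    countIn (fun k => ((P k).1, (P k).2 + δ)) t ≤ countIn P t := by
  refine Finset.card_le_card (Finset.monotone_filter_right _ ?_)
  rintro k - ⟨hx, hxt, -, hyt⟩
  exact ⟨hx, hxt, hP k, by linarith⟩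

lemma countIn_le_countIn_add_snd_add_card (hδ : 0 ≤ δ) (t : ℝ × ℝ) :
    countIn P t ≤ countIn (fun k => ((P k).1, (P k).2 + δ)) t +
      (Finset.univ.filter fun k => (P k).2 ∈ Set.Ico (t.2 - δ) t.2).card := by
  classical
  refine (Finset.card_le_card fun k hk => ?_).trans (Finset.card_union_le _ _)
  simp only [Finset.mem_union, Finset.mem_filter_univ] at hk ⊢
  obtain ⟨hx, hxt, hy, hyt⟩ := hk
  rcases lt_or_ge ((P k).2 + δ) t.2 with h | h
  · exact .inl ⟨hx, hxt, add_nonneg hy hδ, h⟩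
  · exact .inr ⟨by linarith, hyt⟩

lemma countIn_le_countIn_add_snd_add_one (hδ : 0 ≤ δ)
    (hsep : Pairwise fun k l => δ ≤ |(P k).2 - (P l).2|) (t : ℝ × ℝ) :
    countIn P t ≤ countIn (fun k => ((P k).1, (P k).2 + δ)) t + 1 :=
  (countIn_le_countIn_add_snd_add_card hδ t).trans
    (Nat.add_le_add_left (card_filter_mem_Ico_le_one_of_pairwise hsep t.2) _)

end Counting

section BinaryFraction

/-- The number with finite binary expansion `0.a₀a₁…aₙ₋₁`. The second coordinate of
`hammersleyShifted n σ s` is by definition the value at `fun i => s i != σ i`. -/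
noncomputable def binaryFraction {n : ℕ} (a : Fin n → Bool) : ℝ :=
  ∑ i, bval (a i) / 2 ^ (i.val + 1)

lemma bval_eq_toNat (b : Bool) : bval b = b.toNat := by
  cases b <;> simp [bval]

lemma bval_add_bval_not (b : Bool) : bval b + bval (!b) = 1 := by
  cases b <;> simp [bval]

lemma ofBits_injective (n : ℕ) : Function.Injective (Nat.ofBits (n := n)) := by
  intro f g h
  funext i
  rw [← Nat.testBit_ofBits_lt f i i.isLt, h, Nat.testBit_ofBits_lt g i i.isLt]

lemma binaryFraction_eq_ofBits_div {n : ℕ} (a : Fin n → Bool) :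
    binaryFraction a = Nat.ofBits (a ∘ Fin.rev) / 2 ^ n := by
  induction n with
  | zero => simp [binaryFraction]
  | succ n ih =>
    have init : ∑ i : Fin n, bval (a i.castSucc) / 2 ^ (i.val + 1) =
        Nat.ofBits ((a ∘ Fin.rev) ∘ Fin.succ) / 2 ^ n := by
      have rev_comp_succ : (Fin.rev ∘ Fin.succ : Fin n → Fin (n + 1)) = Fin.castSucc ∘ Fin.rev :=
        funext Fin.rev_succ
      rw [Function.comp_assoc, rev_comp_succ]
      exact ih (a ∘ Fin.castSucc)
    rw [binaryFraction, Fin.sum_univ_castSucc, Nat.ofBits_succ]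
    simp only [Fin.val_castSucc, Fin.val_last]
    rw [init, bval_eq_toNat, Function.comp_apply, Fin.rev_zero]
    push_cast
    field_simp
    ring

lemma binaryFraction_nonneg {n : ℕ} (a : Fin n → Bool) : 0 ≤ binaryFraction a := by
  rw [binaryFraction_eq_ofBits_div]
  positivity

lemma one_div_two_pow_le_abs_binaryFraction_sub {n : ℕ} {a b : Fin n → Bool} (hab : a ≠ b) :
    1 / 2 ^ n ≤ |binaryFraction a - binaryFraction b| := by
  have hne : Nat.ofBits (a ∘ Fin.rev) ≠ Nat.ofBits (b ∘ Fin.rev) :=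
    (ofBits_injective n).ne (Fin.rev_surjective.injective_comp_right.ne hab)
  have hone : (1 : ℝ) ≤ |(Nat.ofBits (a ∘ Fin.rev) : ℝ) - Nat.ofBits (b ∘ Fin.rev)| := by
    exact_mod_cast Int.one_le_abs (sub_ne_zero.mpr (Nat.cast_injective.ne hne))
  rw [binaryFraction_eq_ofBits_div, binaryFraction_eq_ofBits_div, ← sub_div, abs_div,
    abs_of_pos (by positivity : (0 : ℝ) < 2 ^ n)]
  gcongr

lemma binaryFraction_add_binaryFraction_not {n : ℕ} (a : Fin n → Bool) :
    binaryFraction a + binaryFraction (fun i => !a i) = 1 - 1 / 2 ^ n := by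
  simp only [binaryFraction, ← Finset.sum_add_distrib, ← add_div, bval_add_bval_not]
  induction n with
  | zero => simp
  | succ n ih =>
    rw [Fin.sum_univ_castSucc]
    simp only [Fin.val_castSucc, Fin.val_last, ih (a ∘ Fin.castSucc)]
    field_simp
    ring

end BinaryFraction

section Hammersley

variable {n : ℕ}

lemma one_sub_hammersleyShifted_snd (σ s : Fin n → Bool) :
    1 - (hammersleyShifted n σ s).2 =
      (hammersleyShifted n (fun i => !σ i) s).2 + 1 / 2 ^ n := by
  have h := binaryFraction_add_binaryFraction_not fun i => s i != σ i
  simp only [← Bool.bne_not] at h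
  change 1 - binaryFraction _ = binaryFraction _ + 1 / 2 ^ n
  linarith

lemma hammersleyShifted_snd_nonneg (σ s : Fin n → Bool) : 0 ≤ (hammersleyShifted n σ s).2 :=
  binaryFraction_nonneg _

lemma pairwise_one_div_two_pow_le_abs_hammersleyShifted_snd_sub (σ : Fin n → Bool) :
    Pairwise fun s s' =>
      1 / 2 ^ n ≤ |(hammersleyShifted n σ s).2 - (hammersleyShifted n σ s').2| := by
  intro s s' hss'
  refine one_div_two_pow_le_abs_binaryFraction_sub fun h => hss' ?_
  funext i
  exact Bool.bne_left_inj.mp (congrFun h i)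

lemma countIn_hammersleySym (σ : Fin n → Bool) (t : ℝ × ℝ) :
    countIn (hammersleySym n σ) t =
      countIn (hammersleyShifted n σ) t + countIn (hammersleyShifted n fun i => !σ i) t :=
  countIn_bool_prod _ t

lemma countIn_hammersleySymTilde (σ : Fin n → Bool) (t : ℝ × ℝ) :
    countIn (hammersleySymTilde n σ) t =
      countIn (hammersleyShifted n σ) t +
        countIn (fun s => ((hammersleyShifted n (fun i => !σ i) s).1,
          (hammersleyShifted n (fun i => !σ i) s).2 + 1 / 2 ^ n)) t := by
  simp only [← one_sub_hammersleyShifted_snd]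
  exact countIn_bool_prod _ t

end Hammersley

theorem statement16_general (n : ℕ) (σ : Fin n → Bool) (t : ℝ × ℝ) :
    countIn (hammersleySymTilde n σ) t ≤ countIn (hammersleySym n σ) t ∧
    countIn (hammersleySym n σ) t ≤ countIn (hammersleySymTilde n σ) t + 1 := by
  have hδ : (0 : ℝ) ≤ 1 / 2 ^ n := by positivity
  rw [countIn_hammersleySym, countIn_hammersleySymTilde, add_assoc]
  exact ⟨Nat.add_le_add_left (countIn_add_snd_le (hammersleyShifted_snd_nonneg _) hδ t) _,
    Nat.add_le_add_left
      (countIn_le_countIn_add_snd_add_one hδ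
        (pairwise_one_div_two_pow_le_abs_hammersleyShifted_snd_sub _) t) _⟩

/-- Counting functions of the symmetrized point set and of the multiset
`~R_{n,σ}^{sym}` differ by at most one. -/
theorem statement16 (n : ℕ) (hn : 0 < n) (σ : Fin n → Bool)
    (t : ℝ × ℝ) (ht : t ∈ Set.Icc (0 : ℝ × ℝ) 1) :
    countIn (hammersleySymTilde n σ) t ≤ countIn (hammersleySym n σ) t ∧
    countIn (hammersleySym n σ) t ≤ countIn (hammersleySymTilde n σ) t + 1 :=
  statement16_general n σ t
end
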